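/- Let σ² > 0 and ε > 0 be real numbers, and let P_ε > 0 be the unique positive real with (1/2) * (P_ε/σ² + Real.log (σ²/(P_ε + σ²))) = 2 * ε². Then for every real P ≥ 0 one has klDiv (gaussianReal 0 (P + σ²)) (gaussianReal 0 σ²) ≤ ENNReal.ofReal (2 * ε²) if and only if P ≤ P_ε. -/

import Mathlib

open MeasureTheory ProbabilityTheory
open scoped ENNReal NNReal Classical

/-- Kullback–Leibler divergence of `μ` from `ν`: `∫ log (dμ/dν) dμ` when `μ ≪ ν` and the
log-likelihood ratio is `μ`-integrable, and `∞` otherwise. -/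
noncomputable def klDiv {α : Type*} [MeasurableSpace α] (μ ν : Measure α) : ℝ≥0∞ :=
  if μ ≪ ν ∧ Integrable (llr μ ν) μ then ENNReal.ofReal (∫ x, llr μ ν x ∂μ) else ⊤

/-! The divergence of `N(m₁, v)` from `N(m₂, w)` is `(r - log r - 1 + (m₁ - m₂)² / w) / 2`, where
`r = v / w`. Since `r - log r` is strictly increasing for `r ≥ 1`, the divergence is strictly
increasing in `v ≥ w`. With `w = σ²` and `v = P + σ²`, the equation for `P_ε` says that the
divergence at `P_ε` is exactly `2 ε²`. -/

lemma strictMonoOn_sub_log : StrictMonoOn (fun x : ℝ ↦ x - Real.log x) (Set.Ici 1) := by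
  intro x (hx : 1 ≤ x) y (hy : 1 ≤ y) hxy
  have hx0 : 0 < x := by positivity
  have hy0 : 0 < y := by positivity
  have hlog : Real.log y - Real.log x < y - x := calc
    Real.log y - Real.log x = Real.log (y / x) := (Real.log_div hy0.ne' hx0.ne').symm
    _ < y / x - 1 := Real.log_lt_sub_one_of_pos (div_pos hy0 hx0) ((one_lt_div hx0).2 hxy).ne'
    _ = (y - x) / x := by field_simp
    _ ≤ y - x := div_le_self (sub_nonneg.2 hxy.le) hx
  linarith

lemma integral_sub_const_sq {Ω : Type*} [MeasurableSpace Ω] {μ : Measure Ω}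
    [IsProbabilityMeasure μ] {X : Ω → ℝ} (hX : MemLp X 2 μ) (a : ℝ) :
    ∫ ω, (X ω - a) ^ 2 ∂μ = variance X μ + (∫ ω, X ω ∂μ - a) ^ 2 := by
  have hvar := variance_eq_sub (hX.sub (memLp_const a))
  have hmean : ∫ ω, (X ω - a) ∂μ = ∫ ω, X ω ∂μ - a := by
    rw [integral_sub (hX.integrable one_le_two) (integrable_const a), integral_const,
      probReal_univ, one_smul]
  have hshift : variance (fun ω ↦ X ω - a) μ = variance X μ :=
    variance_sub_const hX.aestronglyMeasurable a
  simp only [Pi.sub_def, Pi.pow_def, hmean, hshift] at hvar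
  linarith

lemma integrable_sub_const_sq_gaussianReal (m : ℝ) (v : ℝ≥0) (a : ℝ) :
    Integrable (fun x ↦ (x - a) ^ 2) (gaussianReal m v) :=
  ((memLp_id_gaussianReal 2).sub (memLp_const a)).integrable_sq

lemma integral_sub_const_sq_gaussianReal (m : ℝ) (v : ℝ≥0) (a : ℝ) :
    ∫ x, (x - a) ^ 2 ∂gaussianReal m v = v + (m - a) ^ 2 := by
  simpa only [id_eq, variance_id_gaussianReal, integral_id_gaussianReal] using
    integral_sub_const_sq (memLp_id_gaussianReal (μ := m) (v := v) 2) a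

lemma log_gaussianPDFReal (m : ℝ) {v : ℝ≥0} (hv : v ≠ 0) (x : ℝ) :
    Real.log (gaussianPDFReal m v x) = -(Real.log (2 * Real.pi * v) + (x - m) ^ 2 / v) / 2 := by
  rw [gaussianPDFReal, Real.log_mul (by positivity) (by positivity), Real.log_inv,
    Real.log_sqrt (by positivity), Real.log_exp]
  ring

lemma gaussianReal_absolutelyContinuous_gaussianReal (m₁ m₂ : ℝ) {v w : ℝ≥0} (hv : v ≠ 0)
    (hw : w ≠ 0) : gaussianReal m₁ v ≪ gaussianReal m₂ w :=
  (gaussianReal_absolutelyContinuous m₁ hv).trans (gaussianReal_absolutelyContinuous' m₂ hw)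

lemma llr_gaussianReal (m₁ m₂ : ℝ) {v w : ℝ≥0} (hv : v ≠ 0) (hw : w ≠ 0) :
    llr (gaussianReal m₁ v) (gaussianReal m₂ w) =ᵐ[gaussianReal m₁ v] fun x ↦
      (Real.log (w / v) + ((x - m₂) ^ 2 / w - (x - m₁) ^ 2 / v)) / 2 := by
  have hv_vol := gaussianReal_absolutelyContinuous m₁ hv
  have hw_vol := gaussianReal_absolutelyContinuous m₂ hw
  have hvw := gaussianReal_absolutelyContinuous_gaussianReal m₁ m₂ hv hw
  have hlog : Real.log (w / v) = Real.log (2 * Real.pi * w) - Real.log (2 * Real.pi * v) := by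
    rw [← Real.log_div (by positivity) (by positivity), mul_div_mul_left _ _ (by positivity)]
  filter_upwards [hvw (Measure.rnDeriv_eq_div hv_vol hw_vol), hv_vol (rnDeriv_gaussianReal m₁ v),
    hv_vol (rnDeriv_gaussianReal m₂ w)] with x hdiv hpdf₁ hpdf₂
  rw [llr, hdiv, hpdf₁, hpdf₂, ENNReal.toReal_div, toReal_gaussianPDF, toReal_gaussianPDF,
    Real.log_div (gaussianPDFReal_pos m₁ v x hv).ne' (gaussianPDFReal_pos m₂ w x hw).ne',
    log_gaussianPDFReal m₁ hv, log_gaussianPDFReal m₂ hw, hlog]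
  ring

lemma klDiv_gaussianReal (m₁ m₂ : ℝ) {v w : ℝ≥0} (hv : v ≠ 0) (hw : w ≠ 0) :
    klDiv (gaussianReal m₁ v) (gaussianReal m₂ w) =
      ENNReal.ofReal ((v / w - Real.log (v / w) - 1 + (m₁ - m₂) ^ 2 / w) / 2) := by
  have hllr := llr_gaussianReal m₁ m₂ hv hw
  have hconst := integrable_const (μ := gaussianReal m₁ v) (Real.log (w / v))
  have hsq₁ := (integrable_sub_const_sq_gaussianReal m₁ v m₁).div_const (v : ℝ)
  have hsq₂ := (integrable_sub_const_sq_gaussianReal m₁ v m₂).div_const (w : ℝ)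
  have hquad : Integrable (fun x ↦ (x - m₂) ^ 2 / w - (x - m₁) ^ 2 / v) (gaussianReal m₁ v) :=
    hsq₂.sub hsq₁
  have hint : Integrable (llr (gaussianReal m₁ v) (gaussianReal m₂ w)) (gaussianReal m₁ v) :=
    ((hconst.add hquad).div_const 2).congr hllr.symm
  rw [klDiv, if_pos ⟨gaussianReal_absolutelyContinuous_gaussianReal m₁ m₂ hv hw, hint⟩,
    integral_congr_ae hllr, integral_div, integral_add hconst hquad, integral_sub hsq₂ hsq₁,
    integral_const, probReal_univ, one_smul, integral_div, integral_div,
    integral_sub_const_sq_gaussianReal, integral_sub_const_sq_gaussianReal, ← inv_div (v : ℝ) w,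
    Real.log_inv]
  congr 1
  field_simp
  ring

lemma strictMonoOn_klDiv_gaussianReal (m₁ m₂ : ℝ) {w : ℝ≥0} (hw : w ≠ 0) :
    StrictMonoOn (fun v ↦ klDiv (gaussianReal m₁ v) (gaussianReal m₂ w)) (Set.Ici w) := by
  intro u (hu : w ≤ u) v (hv : w ≤ v) huv
  have hw0 : (0 : ℝ) < w := by positivity
  have hu_one : 1 ≤ (u / w : ℝ) := (one_le_div hw0).2 (by exact_mod_cast hu)
  have hv_one : 1 ≤ (v / w : ℝ) := (one_le_div hw0).2 (by exact_mod_cast hv)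
  have hratio : (u / w : ℝ) < v / w := by gcongr
  have hlt := strictMonoOn_sub_log hu_one hv_one hratio
  have hlog := Real.log_le_sub_one_of_pos (zero_lt_one.trans_le hu_one)
  have hmean : 0 ≤ (m₁ - m₂) ^ 2 / w := by positivity
  dsimp only at hlt ⊢
  rw [klDiv_gaussianReal m₁ m₂ (hw.bot_lt.trans_le hu).ne' hw,
    klDiv_gaussianReal m₁ m₂ (hw.bot_lt.trans_le hv).ne' hw,
    ENNReal.ofReal_lt_ofReal_iff_of_nonneg (by linarith)]
  linarith

lemma klDiv_gaussianReal_add_self (m : ℝ) (p : ℝ≥0) {s : ℝ≥0} (hs : s ≠ 0) :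
    klDiv (gaussianReal m (p + s)) (gaussianReal m s) =
      ENNReal.ofReal ((1 / 2) * ((p : ℝ) / s + Real.log (s / (p + s)))) := by
  rw [klDiv_gaussianReal m m (by positivity) hs, NNReal.coe_add, ← inv_div (p + s : ℝ) s,
    Real.log_inv]
  congr 1
  field_simp
  ring

theorem stmt_5 (σ2 : ℝ≥0) (hσ : 0 < σ2) (ε : ℝ) (hε : 0 < ε) (Pε : ℝ≥0) (hPε : 0 < Pε)
    (heq : (1/2) * ((Pε : ℝ) / (σ2 : ℝ) + Real.log ((σ2 : ℝ) / ((Pε : ℝ) + (σ2 : ℝ)))) =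
      2 * ε ^ 2) :
    ∀ P : ℝ≥0,
      klDiv (gaussianReal 0 (P + σ2)) (gaussianReal 0 σ2) ≤ ENNReal.ofReal (2 * ε ^ 2) ↔
        P ≤ Pε := by
  intro P
  have hmono := strictMonoOn_klDiv_gaussianReal 0 0 hσ.ne'
  rw [← heq, ← klDiv_gaussianReal_add_self 0 Pε hσ.ne']
  exact (hmono.le_iff_le (Set.mem_Ici.2 le_add_self) (Set.mem_Ici.2 le_add_self)).trans
    (add_le_add_iff_right σ2)
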